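/- Let T ∈ k(x)^{n×n} be strictly proper with a realisation T = X M^{-1} Y (X, M, Y polynomial matrices, M non-singular), Δ = det M, δ = deg Δ, θ = ∂_x + T, a ∈ k[x]^n with d_a = deg a, and ρ = dim_{k(x)} span(θ^i a : i ≥ 0). Then there exists a nonzero (η_0,…,η_ρ) ∈ k[x]^{ρ+1} with Σ_i η_i θ^i a = 0 and deg η_i ≤ ρ d_a + ρ δ − (ρ(ρ+1)/2 − i) for all 0 ≤ i ≤ ρ. -/

import Mathlib

set_option synthInstance.maxHeartbeats 1000000

open Polynomial

/-- The standard derivative on the rational function field `k(x)`. -/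
noncomputable def ratDeriv {k : Type*} [Field k] (f : RatFunc k) : RatFunc k :=
  algebraMap (Polynomial k) (RatFunc k)
      (derivative f.num * f.denom - f.num * derivative f.denom) /
    (algebraMap (Polynomial k) (RatFunc k) f.denom) ^ 2

/-- The pseudo-linear map `θ = ∂_x + T` on `k(x)^n`. -/
noncomputable def pseudoLin {k : Type*} [Field k] {n : ℕ}
    (T : Matrix (Fin n) (Fin n) (RatFunc k)) (v : Fin n → RatFunc k) : Fin n → RatFunc k :=
  (fun i => ratDeriv (v i)) + T.mulVec v


open Module in
theorem exists_compl_mulVec {k : Type*} [Field k] {m : ℕ} (M : Matrix (Fin m) (Fin m) k[X])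
    (hM : M.det ≠ 0) : ∃ F : Submodule k (Fin m → k[X]), FiniteDimensional k F ∧
      finrank k F ≤ M.det.natDegree ∧ ∀ v : Fin m → k[X], ∃ w, ∃ f ∈ F, v = M.mulVec w + f := by
  classical
  have hinj : Function.Injective M.mulVecLin := by
    intro v w h
    refine sub_eq_zero.1 (Matrix.eq_zero_of_mulVec_eq_zero hM ?_)
    rw [Matrix.mulVec_sub]
    exact sub_eq_zero.2 h
  let N := LinearMap.range M.mulVecLin
  let e0 : (Fin m → k[X]) ≃ₗ[k[X]] N := LinearEquiv.ofInjective _ hinj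
  have h : finrank k[X] N = finrank k[X] (Fin m → k[X]) := e0.finrank_eq.symm
  let b := Pi.basisFun k[X] (Fin m)
  let b' := Submodule.smithNormalFormTopBasis b h
  let ab := Submodule.smithNormalFormBotBasis b h
  let c := Submodule.smithNormalFormCoeffs b h
  have hab : ∀ i, (ab i : Fin m → k[X]) = c i • b' i := Submodule.smithNormalFormBotBasis_def b h
  have hc : ∀ i, c i ≠ 0 := fun i => Submodule.smithNormalFormCoeffs_ne_zero b h i
  have hass : Associated M.det (∏ i, c i) := by
    rw [← Matrix.det_diagonal, ← LinearMap.det_toLin b' (Matrix.diagonal c),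
      ← LinearMap.det_toLin' M]
    let e := (b'.equiv ab (Equiv.refl _)).trans e0.symm
    refine (LinearMap.associated_det_of_eq_comp e _ _ ?_).symm
    intro x
    suffices Matrix.toLin b' b' (Matrix.diagonal c) = (Matrix.toLin' M) ∘ₗ e.toLinearMap from
      LinearMap.congr_fun this x
    refine b'.ext fun i => ?_
    have h1 : (Matrix.toLin' M) (e (b' i)) = (e0 (e (b' i)) : Fin m → k[X]) := rfl
    simp only [LinearMap.comp_apply, LinearEquiv.coe_coe]
    rw [h1]
    simp only [e, LinearEquiv.trans_apply, LinearEquiv.apply_symm_apply, Basis.equiv_apply,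
      Equiv.refl_apply, hab]
    simp [Matrix.toLin_apply, Finsupp.single_eq_pi_single,
      Pi.single_apply]
  have : ∀ i, FiniteDimensional k (k[X] ⧸ Ideal.span ({Submodule.smithNormalFormCoeffs b h i} : Set k[X])) :=
    fun i => PowerBasis.finite <| AdjoinRoot.powerBasis <| hc i
  have hfr : finrank k ((Fin m → k[X]) ⧸ N) = M.det.natDegree := by
    rw [natDegree_eq_of_degree_eq (degree_eq_degree_of_associated hass),
      natDegree_prod _ _ fun i _ => hc i, Submodule.finrank_quotient_eq_sum k b h]
    congr with i
    exact (AdjoinRoot.powerBasis <| hc i).finrank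
  have : FiniteDimensional k ((Fin m → k[X]) ⧸ N) :=
    LinearEquiv.finiteDimensional (((N.quotientEquivPiSpan b h).restrictScalars k).symm)
  let q : (Fin m → k[X]) →ₗ[k] ((Fin m → k[X]) ⧸ N) := N.mkQ.restrictScalars k
  obtain ⟨s, hs⟩ := q.exists_rightInverse_of_surjective
    (LinearMap.range_eq_top.2 N.mkQ_surjective)
  refine ⟨LinearMap.range s, inferInstance, hfr ▸ LinearMap.finrank_range_le s, fun v => ?_⟩
  have : v - s (q v) ∈ N := by
    rw [← Submodule.Quotient.mk_eq_zero, Submodule.Quotient.mk_sub, sub_eq_zero]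
    exact (LinearMap.congr_fun hs (q v)).symm
  obtain ⟨w, hw⟩ := this
  refine ⟨w, s (q v), ⟨_, rfl⟩, ?_⟩
  rw [← Matrix.mulVecLin_apply, hw]; abel

section RD
variable {k : Type*} [Field k]

local notation "ι" => algebraMap (Polynomial k) (RatFunc k)

theorem ratDeriv_div (p q : k[X]) (hq : q ≠ 0) :
    ratDeriv (ι p / ι q) = ι (derivative p * q - p * derivative q) / (ι q) ^ 2 := by
  set f := ι p / ι q with hf
  have hd : f.denom ≠ 0 := f.denom_ne_zero
  have hq' : ι q ≠ 0 := by simpa using hq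
  have hd' : ι f.denom ≠ 0 := by simpa using hd
  have h1 : ι f.num / ι f.denom = ι p / ι q := by rw [RatFunc.num_div_denom]
  have h2 : f.num * q = p * f.denom := by
    rw [div_eq_div_iff hd' hq', ← map_mul, ← map_mul] at h1
    exact RatFunc.algebraMap_injective k h1
  have h3 : derivative f.num * q + f.num * derivative q =
      derivative p * f.denom + p * derivative f.denom := by
    rw [← derivative_mul, ← derivative_mul, h2]
  rw [ratDeriv, div_eq_div_iff (pow_ne_zero 2 hd') (pow_ne_zero 2 hq'), ← map_pow, ← map_pow,
    ← map_mul, ← map_mul]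
  congr 1
  linear_combination (q * f.denom) * h3 - (q * derivative f.denom + f.denom * derivative q) * h2

theorem exists_div (f : RatFunc k) : ∃ p q : k[X], q ≠ 0 ∧ f = ι p / ι q :=
  ⟨f.num, f.denom, f.denom_ne_zero, (RatFunc.num_div_denom f).symm⟩

theorem ratDeriv_add (f g : RatFunc k) : ratDeriv (f + g) = ratDeriv f + ratDeriv g := by
  obtain ⟨p, q, hq, rfl⟩ := exists_div f
  obtain ⟨r, s, hs, rfl⟩ := exists_div g
  have hq' : ι q ≠ 0 := by simpa using hq
  have hs' : ι s ≠ 0 := by simpa using hs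
  have : ι p / ι q + ι r / ι s = ι (p * s + q * r) / ι (q * s) := by
    rw [div_add_div _ _ hq' hs']; simp
  rw [this, ratDeriv_div _ _ hq, ratDeriv_div _ _ hs, ratDeriv_div _ _ (mul_ne_zero hq hs)]
  simp only [derivative_mul, map_mul, map_add, map_sub]
  field_simp
  ring

theorem ratDeriv_mul (f g : RatFunc k) :
    ratDeriv (f * g) = ratDeriv f * g + f * ratDeriv g := by
  obtain ⟨p, q, hq, rfl⟩ := exists_div f
  obtain ⟨r, s, hs, rfl⟩ := exists_div g
  have hq' : ι q ≠ 0 := by simpa using hq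
  have hs' : ι s ≠ 0 := by simpa using hs
  have : ι p / ι q * (ι r / ι s) = ι (p * r) / ι (q * s) := by
    rw [div_mul_div_comm]; simp
  rw [this, ratDeriv_div _ _ hq, ratDeriv_div _ _ hs, ratDeriv_div _ _ (mul_ne_zero hq hs)]
  simp only [derivative_mul, map_mul, map_add, map_sub]
  field_simp
  ring

theorem ratDeriv_poly (p : k[X]) : ratDeriv (ι p) = ι (derivative p) := by
  have := ratDeriv_div p 1 one_ne_zero
  simpa using this

theorem pseudoLin_add {n : ℕ} (T : Matrix (Fin n) (Fin n) (RatFunc k)) (v w : Fin n → RatFunc k) :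
    pseudoLin T (v + w) = pseudoLin T v + pseudoLin T w := by
  ext i
  simp only [pseudoLin, Matrix.mulVec_add, Pi.add_apply, ratDeriv_add]
  ring

theorem pseudoLin_smul {n : ℕ} (T : Matrix (Fin n) (Fin n) (RatFunc k)) (f : RatFunc k)
    (v : Fin n → RatFunc k) :
    pseudoLin T (f • v) = ratDeriv f • v + f • pseudoLin T v := by
  ext i
  simp only [pseudoLin, Matrix.mulVec_smul, Pi.add_apply, Pi.smul_apply, smul_eq_mul, ratDeriv_mul]
  ring

/-- θ as a `k`-linear map. -/
noncomputable def thetaL {n : ℕ} (T : Matrix (Fin n) (Fin n) (RatFunc k)) :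
    (Fin n → RatFunc k) →ₗ[k] (Fin n → RatFunc k) where
  toFun := pseudoLin T
  map_add' := pseudoLin_add T
  map_smul' := by
    intro c v
    have h : ∀ w : Fin n → RatFunc k, c • w = ι (Polynomial.C c) • w := by
      intro w
      rw [← algebraMap_smul (RatFunc k) c w]
      congr 1
    rw [h, pseudoLin_smul, ratDeriv_poly]
    simp [h]

/-- degree at infinity at most `d`. -/
def degLe (f : RatFunc k) (d : ℤ) : Prop := f = 0 ∨ f.intDegree ≤ d

theorem degLe_mono {f : RatFunc k} {d e : ℤ} (h : degLe f d) (hde : d ≤ e) : degLe f e :=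
  h.imp id fun h => h.trans hde

theorem degLe_add {f g : RatFunc k} {d : ℤ} (hf : degLe f d) (hg : degLe g d) :
    degLe (f + g) d := by
  rcases hf with rfl | hf
  · simpa using hg
  rcases eq_or_ne g 0 with rfl | h0
  · rw [add_zero]; exact Or.inr hf
  rcases hg with rfl | hg
  · exact absurd rfl h0
  by_cases h : f + g = 0
  · exact Or.inl h
  · exact Or.inr ((RatFunc.intDegree_add_le h0 h).trans (max_le hf hg))

theorem degLe_mul {f g : RatFunc k} {d e : ℤ} (hf : degLe f d) (hg : degLe g e) :
    degLe (f * g) (d + e) := by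
  rcases eq_or_ne f 0 with rfl | h1
  · left; simp
  rcases eq_or_ne g 0 with rfl | h2
  · left; simp
  right
  rw [RatFunc.intDegree_mul h1 h2]
  exact add_le_add (hf.resolve_left h1) (hg.resolve_left h2)

theorem degLe_sum {α : Type*} (s : Finset α) (f : α → RatFunc k) (d : ℤ)
    (h : ∀ i ∈ s, degLe (f i) d) : degLe (∑ i ∈ s, f i) d :=
  Finset.sum_induction _ (fun x => degLe x d) (fun _ _ => degLe_add) (Or.inl rfl) h

theorem degLe_poly {p : k[X]} {d : ℕ} (h : p.natDegree ≤ d) : degLe (ι p) d :=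
  Or.inr (by rw [RatFunc.intDegree_polynomial]; exact_mod_cast h)

theorem natDegree_le_of_degLe {p : k[X]} {d : ℕ} (h : degLe (ι p) d) : p.natDegree ≤ d := by
  rcases h with h | h
  · have : p = 0 := by simpa using h
    simp [this]
  · rw [RatFunc.intDegree_polynomial] at h; exact_mod_cast h

theorem degLe_ratDeriv {f : RatFunc k} {d : ℤ} (h : degLe f d) : degLe (ratDeriv f) (d - 1) := by
  rcases h with rfl | h
  · left; simpa using ratDeriv_poly (0 : k[X])
  by_cases h0 : ratDeriv f = 0
  · exact Or.inl h0
  right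
  have hd : f.denom ≠ 0 := f.denom_ne_zero
  have hd' : ι f.denom ≠ 0 := by simpa using hd
  set P := derivative f.num * f.denom - f.num * derivative f.denom with hP
  have hrd : ratDeriv f = ι P / (ι f.denom) ^ 2 := rfl
  have hP0 : P ≠ 0 := by
    intro hh; apply h0; rw [hrd, hh]; simp
  rw [hrd, ← map_pow, RatFunc.intDegree_div (by simpa using hP0) (by simpa using hd),
    RatFunc.intDegree_polynomial, RatFunc.intDegree_polynomial, natDegree_pow]
  rw [RatFunc.intDegree] at h
  have key : P.natDegree + 1 ≤ f.num.natDegree + f.denom.natDegree := by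
    have hdeg : P.degree < ((f.num.natDegree + f.denom.natDegree : ℕ) : WithBot ℕ) := by
      refine lt_of_le_of_lt (degree_sub_le _ _) (max_lt ?_ ?_)
      · rcases eq_or_ne f.num 0 with h1 | h1
        · simp [h1]
        rw [degree_mul, degree_eq_natDegree hd, Nat.cast_add, ← degree_eq_natDegree h1]
        exact WithBot.add_lt_add_right (by simp) (degree_derivative_lt h1)
      · rcases eq_or_ne f.num 0 with h1 | h1
        · simp [h1]
        rw [degree_mul, degree_eq_natDegree h1, Nat.cast_add, ← degree_eq_natDegree hd]
        exact WithBot.add_lt_add_left (by simp) (degree_derivative_lt hd)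
    rw [degree_eq_natDegree hP0] at hdeg
    exact_mod_cast hdeg
  push_cast
  have : (P.natDegree : ℤ) + 1 ≤ f.num.natDegree + f.denom.natDegree := by exact_mod_cast key
  linarith

theorem degLe_pseudoLin {n : ℕ} {T : Matrix (Fin n) (Fin n) (RatFunc k)}
    (hsp : ∀ i j, T i j = 0 ∨ (T i j).intDegree < 0) {v : Fin n → RatFunc k} {d : ℤ}
    (h : ∀ i, degLe (v i) d) (i : Fin n) : degLe (pseudoLin T v i) (d - 1) := by
  change degLe (ratDeriv (v i) + ∑ j, T i j * v j) (d - 1)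
  refine degLe_add (degLe_ratDeriv (h i)) (degLe_sum _ _ _ fun j _ => ?_)
  have : degLe (T i j) (-1) := (hsp i j).imp id fun h => by omega
  exact degLe_mono (degLe_mul this (h j)) (by omega)

theorem degLe_iter {n : ℕ} {T : Matrix (Fin n) (Fin n) (RatFunc k)}
    (hsp : ∀ i j, T i j = 0 ∨ (T i j).intDegree < 0) {v : Fin n → RatFunc k} {d : ℤ}
    (h : ∀ i, degLe (v i) d) (j : ℕ) : ∀ i : Fin n, degLe ((pseudoLin T)^[j] v i) (d - j) := by
  induction j with
  | zero => simpa using h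
  | succ j ih =>
    intro i
    rw [Function.iterate_succ_apply']
    exact degLe_mono (degLe_pseudoLin hsp ih i) (by push_cast; omega)

end RD

section Lattice
open Module
variable {k : Type*} [Field k]

local notation "ι" => algebraMap (Polynomial k) (RatFunc k)

/-- embedding of polynomial vectors in rational vectors, as a `k`-linear map -/
noncomputable def embL (k : Type*) [Field k] (n : ℕ) :
    (Fin n → k[X]) →ₗ[k] (Fin n → RatFunc k) :=
  ((Algebra.linearMap k[X] (RatFunc k)).restrictScalars k).compLeft (Fin n)

theorem embL_apply {n : ℕ} (v : Fin n → k[X]) (i : Fin n) : embL k n v i = ι (v i) := rfl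

theorem embL_mulVec {n m : ℕ} (A : Matrix (Fin n) (Fin m) k[X]) (v : Fin m → k[X]) :
    embL k n (A.mulVec v) = (A.map ι).mulVec (embL k m v) := by
  ext i
  simp [embL_apply, Matrix.mulVec, dotProduct]

/-- The lattices `L_j`. -/
noncomputable def thLat {n : ℕ} (T : Matrix (Fin n) (Fin n) (RatFunc k)) :
    ℕ → Submodule k (Fin n → RatFunc k)
  | 0 => LinearMap.range (embL k n)
  | j + 1 => thLat T j ⊔ (thLat T j).map (thetaL T)

theorem thLat_mono {n : ℕ} (T : Matrix (Fin n) (Fin n) (RatFunc k)) : Monotone (thLat T) :=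
  monotone_nat_of_le_succ fun _ => le_sup_left

theorem thLat_smul {n : ℕ} (T : Matrix (Fin n) (Fin n) (RatFunc k)) (j : ℕ) :
    ∀ (p : k[X]), ∀ v ∈ thLat T j, ι p • v ∈ thLat T j := by
  induction j with
  | zero =>
    rintro p _ ⟨w, rfl⟩
    refine ⟨p • w, ?_⟩
    ext i
    simp [embL_apply]
  | succ j ih =>
    intro p v hv
    obtain ⟨u, hu, w, hw, rfl⟩ := Submodule.mem_sup.1 hv
    obtain ⟨b, hb, rfl⟩ := hw
    have h1 : ι p • thetaL T b = thetaL T (ι p • b) - ι (derivative p) • b := by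
      change ι p • pseudoLin T b = pseudoLin T (ι p • b) - ι (derivative p) • b
      rw [pseudoLin_smul, ratDeriv_poly]; abel
    rw [smul_add, h1]
    refine Submodule.add_mem _ (Submodule.mem_sup_left (ih p u hu)) (Submodule.sub_mem _ ?_ ?_)
    · exact Submodule.mem_sup_right ⟨_, ih p b hb, rfl⟩
    · exact Submodule.mem_sup_left (ih _ b hb)

theorem iter_mem_thLat {n : ℕ} (T : Matrix (Fin n) (Fin n) (RatFunc k)) (a : Fin n → k[X]) (j : ℕ) :
    (pseudoLin T)^[j] (fun i => ι (a i)) ∈ thLat T j := by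
  induction j with
  | zero => exact ⟨a, rfl⟩
  | succ j ih =>
    rw [Function.iterate_succ_apply']
    exact Submodule.mem_sup_right ⟨_, ih, rfl⟩

theorem thLat_one_le {n m : ℕ} (T : Matrix (Fin n) (Fin n) (RatFunc k))
    (X : Matrix (Fin n) (Fin m) (Polynomial k)) (M : Matrix (Fin m) (Fin m) (Polynomial k))
    (Y : Matrix (Fin m) (Fin n) (Polynomial k)) (hM : M.det ≠ 0)
    (hT : T = X.map ι * (M.map ι)⁻¹ * Y.map ι) :
    ∃ G : Submodule k (Fin n → RatFunc k), FiniteDimensional k G ∧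
      finrank k G ≤ M.det.natDegree ∧ thLat T 1 ≤ thLat T 0 ⊔ G := by
  obtain ⟨F, hF, hFr, hFd⟩ := exists_compl_mulVec M hM
  let Q : Matrix (Fin n) (Fin m) (RatFunc k) := X.map ι * (M.map ι)⁻¹
  let g : (Fin m → k[X]) →ₗ[k] (Fin n → RatFunc k) :=
    (Q.mulVecLin.restrictScalars k).comp (embL k m)
  have hu : IsUnit (M.map ι).det := by
    have h1 : (M.map ι).det = ι M.det := ((algebraMap k[X] (RatFunc k)).map_det M).symm
    rw [h1, isUnit_iff_ne_zero]
    simpa using hM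
  have hQM : Q * M.map ι = X.map ι := by
    simp only [Q]
    rw [Matrix.mul_assoc, Matrix.nonsing_inv_mul _ hu, Matrix.mul_one]
  refine ⟨F.map g, inferInstance, (Submodule.finrank_map_le g F).trans hFr, ?_⟩
  refine sup_le le_sup_left ?_
  rintro _ ⟨_, ⟨p, rfl⟩, rfl⟩
  obtain ⟨w, f, hf, hw⟩ := hFd (Y.mulVec p)
  have h2 : thetaL T (embL k n p) =
      embL k n ((fun i => derivative (p i)) + X.mulVec w) + g f := by
    change (fun i => ratDeriv (ι (p i))) + T.mulVec (embL k n p) = _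
    have h3 : T.mulVec (embL k n p) = embL k n (X.mulVec w) + g f := by
      change _ = _ + Q.mulVec (embL k m f)
      rw [hT, ← Matrix.mulVec_mulVec, ← embL_mulVec, hw, map_add, Matrix.mulVec_add, embL_mulVec,
        Matrix.mulVec_mulVec, embL_mulVec]
      change (Q * M.map ι).mulVec _ + Q.mulVec _ = _
      rw [hQM]
    rw [h3, map_add, add_assoc]
    congr 1
    ext i
    rw [ratDeriv_poly]; rfl
  rw [h2]
  exact Submodule.add_mem _ (Submodule.mem_sup_left ⟨_, rfl⟩)
    (Submodule.mem_sup_right ⟨f, hf, rfl⟩)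

theorem thLat_succ_le {n : ℕ} (T : Matrix (Fin n) (Fin n) (RatFunc k)) (δ : ℕ)
    (h1 : ∃ G : Submodule k (Fin n → RatFunc k), FiniteDimensional k G ∧
      finrank k G ≤ δ ∧ thLat T 1 ≤ thLat T 0 ⊔ G) (j : ℕ) :
    ∃ G : Submodule k (Fin n → RatFunc k), FiniteDimensional k G ∧
      finrank k G ≤ δ ∧ thLat T (j + 1) ≤ thLat T j ⊔ G := by
  induction j with
  | zero => exact h1
  | succ j ih =>
    obtain ⟨G, hG, hGr, hGl⟩ := ih
    refine ⟨G.map (thetaL T), inferInstance, (Submodule.finrank_map_le _ G).trans hGr, ?_⟩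
    refine sup_le le_sup_left ?_
    refine (Submodule.map_mono hGl).trans ?_
    rw [Submodule.map_sup]
    exact sup_le_sup_right le_sup_right _

theorem thLat_le {n : ℕ} (T : Matrix (Fin n) (Fin n) (RatFunc k)) (δ : ℕ)
    (h1 : ∃ G : Submodule k (Fin n → RatFunc k), FiniteDimensional k G ∧
      finrank k G ≤ δ ∧ thLat T 1 ≤ thLat T 0 ⊔ G) (j : ℕ) :
    ∃ G : Submodule k (Fin n → RatFunc k), FiniteDimensional k G ∧
      finrank k G ≤ j * δ ∧ thLat T j ≤ thLat T 0 ⊔ G := by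
  induction j with
  | zero => exact ⟨⊥, inferInstance, by simp, le_sup_left⟩
  | succ j ih =>
    obtain ⟨G, hG, hGr, hGl⟩ := ih
    obtain ⟨H, hH, hHr, hHl⟩ := thLat_succ_le T δ h1 j
    refine ⟨G ⊔ H, inferInstance, ?_, ?_⟩
    · have := Submodule.finrank_add_le_finrank_add_finrank G H
      rw [add_mul, one_mul]
      omega
    · rw [← sup_assoc]
      exact hHl.trans (sup_le_sup_right hGl _)

end Lattice

section Indep
open Module
variable {k : Type*} [Field k]

theorem pseudoLin_span {n : ℕ} (T : Matrix (Fin n) (Fin n) (RatFunc k)) (v : Fin n → RatFunc k)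
    (j : ℕ) (h : (pseudoLin T)^[j] v ∈
      Submodule.span (RatFunc k) (Set.range fun i : Fin j => (pseudoLin T)^[(i : ℕ)] v)) (i : ℕ) :
    (pseudoLin T)^[i] v ∈
      Submodule.span (RatFunc k) (Set.range fun i : Fin j => (pseudoLin T)^[(i : ℕ)] v) := by
  set U := Submodule.span (RatFunc k) (Set.range fun i : Fin j => (pseudoLin T)^[(i : ℕ)] v) with hU
  have hst : ∀ w ∈ U, pseudoLin T w ∈ U := by
    intro w hw
    induction hw using Submodule.span_induction with
    | mem x hx =>
      obtain ⟨i, rfl⟩ := hx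
      simp only
      rw [← Function.iterate_succ_apply' (pseudoLin T)]
      rcases Nat.lt_or_ge (i + 1) j with h1 | h1
      · exact Submodule.subset_span ⟨⟨i + 1, h1⟩, rfl⟩
      · have : (i : ℕ) + 1 = j := by omega
        rw [Nat.succ_eq_add_one, this]; exact h
    | zero =>
      have := pseudoLin_smul T 0 0
      simp only [zero_smul, smul_zero, add_zero] at this
      rw [this]; exact U.zero_mem
    | add x y _ _ hx hy => rw [pseudoLin_add]; exact U.add_mem hx hy
    | smul c x hx' hx =>
      rw [pseudoLin_smul]
      exact U.add_mem (U.smul_mem _ hx') (U.smul_mem _ hx)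
  induction i with
  | zero =>
    rcases Nat.eq_zero_or_pos j with h0 | h0
    · subst h0; exact h
    · exact Submodule.subset_span ⟨⟨0, h0⟩, rfl⟩
  | succ i ih => rw [Function.iterate_succ_apply']; exact hst _ ih

theorem iter_linearIndependent {n : ℕ} (T : Matrix (Fin n) (Fin n) (RatFunc k))
    (v : Fin n → RatFunc k) (ρ : ℕ)
    (hρ : ρ = finrank (RatFunc k) (Submodule.span (RatFunc k)
      (Set.range fun i : ℕ => (pseudoLin T)^[i] v))) (j : ℕ) (hj : j ≤ ρ) :
    LinearIndependent (RatFunc k) (fun i : Fin j => (pseudoLin T)^[(i : ℕ)] v) := by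
  induction j with
  | zero => exact linearIndependent_empty_type
  | succ j ih =>
    rw [linearIndependent_finSucc']
    refine ⟨ih (by omega), fun hmem => ?_⟩
    have h1 := pseudoLin_span T v j hmem
    have h2 : Submodule.span (RatFunc k) (Set.range fun i : ℕ => (pseudoLin T)^[i] v) ≤
        Submodule.span (RatFunc k) (Set.range fun i : Fin j => (pseudoLin T)^[(i : ℕ)] v) := by
      rw [Submodule.span_le]
      rintro _ ⟨i, rfl⟩
      exact h1 i
    have h3 := Submodule.finrank_mono h2
    have h4 := finrank_range_le_card (R := RatFunc k)
      (fun i : Fin j => (pseudoLin T)^[(i : ℕ)] v)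
    rw [Set.finrank, Fintype.card_fin] at h4
    omega

theorem exists_rel_coeffs {n : ℕ} (T : Matrix (Fin n) (Fin n) (RatFunc k))
    (v : Fin n → RatFunc k) (ρ : ℕ)
    (hρ : ρ = finrank (RatFunc k) (Submodule.span (RatFunc k)
      (Set.range fun i : ℕ => (pseudoLin T)^[i] v))) :
    ∃ c : Fin (ρ + 1) → RatFunc k, c (Fin.last ρ) = 1 ∧
      ∀ η : Fin (ρ + 1) → RatFunc k, ∑ i, η i • (pseudoLin T)^[(i : ℕ)] v = 0 →
        ∀ i, η i = η (Fin.last ρ) * c i := by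
  have hli := iter_linearIndependent T v ρ hρ ρ le_rfl
  have hle : Submodule.span (RatFunc k) (Set.range fun i : Fin ρ => (pseudoLin T)^[(i : ℕ)] v) ≤
      Submodule.span (RatFunc k) (Set.range fun i : ℕ => (pseudoLin T)^[i] v) := by
    apply Submodule.span_mono
    rintro _ ⟨i, rfl⟩
    exact ⟨i, rfl⟩
  have heq := Submodule.eq_of_le_of_finrank_eq hle (by
    rw [finrank_span_eq_card hli, Fintype.card_fin]; exact hρ)
  have hmem : (pseudoLin T)^[ρ] v ∈
      Submodule.span (RatFunc k) (Set.range fun i : Fin ρ => (pseudoLin T)^[(i : ℕ)] v) := by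
    rw [heq]; exact Submodule.subset_span ⟨ρ, rfl⟩
  obtain ⟨d, hd⟩ := (Submodule.mem_span_range_iff_exists_fun _).1 hmem
  refine ⟨Fin.snoc (fun i => - d i) 1, by simp, fun η hη => ?_⟩
  rw [Fin.sum_univ_castSucc] at hη
  simp only [Fin.val_castSucc, Fin.val_last] at hη
  rw [← hd, Finset.smul_sum, ← Finset.sum_add_distrib] at hη
  have h5 := Fintype.linearIndependent_iff.1 hli
    (fun i => η i.castSucc + η (Fin.last ρ) * d i) (by
      rw [← hη]
      refine Finset.sum_congr rfl fun i _ => ?_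
      rw [add_smul, mul_smul])
  intro i
  refine Fin.lastCases ?_ (fun i => ?_) i
  · simp
  · have := h5 i
    simp only [Fin.snoc_castSucc]
    linear_combination this

end Indep

section Final
open Module
variable {k : Type*} [Field k]

local notation "ι" => algebraMap (Polynomial k) (RatFunc k)

theorem cut_subspace {E W : Type*} [AddCommGroup E] [Module k E] [AddCommGroup W] [Module k W]
    [FiniteDimensional k E] (f : E →ₗ[k] W) (A : Submodule k E) (P : Submodule k W)
    [FiniteDimensional k P] (r : ℕ) (hP : finrank k P ≤ r) (h : ∀ a ∈ A, f a ∈ P) :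
    ∃ A' ≤ A, finrank k A ≤ finrank k A' + r ∧ ∀ a ∈ A', f a = 0 := by
  refine ⟨(LinearMap.ker (f.domRestrict A)).map A.subtype, Submodule.map_subtype_le _ _, ?_, ?_⟩
  · rw [Submodule.finrank_map_subtype_eq]
    have h1 := LinearMap.finrank_range_add_finrank_ker (f.domRestrict A)
    have h2 : LinearMap.range (f.domRestrict A) ≤ P := by
      rintro _ ⟨x, rfl⟩
      exact h x x.2
    have h3 := Submodule.finrank_mono h2
    omega
  · rintro _ ⟨x, hx, rfl⟩
    exact hx

theorem finrank_degreeLT (N : ℕ) : finrank k (degreeLT k N) = N := by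
  rw [(degreeLTEquiv k N).finrank_eq]; simp

instance finite_degreeLT (N : ℕ) : FiniteDimensional k (degreeLT k N) :=
  LinearEquiv.finiteDimensional (degreeLTEquiv k N).symm

theorem mem_degreeLT_of_natDegree {p : k[X]} {N : ℕ} (h : p.natDegree ≤ N) :
    p ∈ degreeLT k (N + 1) := by
  rw [mem_degreeLT]
  refine lt_of_le_of_lt (degree_le_natDegree) ?_
  exact_mod_cast Nat.lt_succ_of_le h

theorem natDegree_of_mem_degreeLT {p : k[X]} {N : ℕ} (h : p ∈ degreeLT k (N + 1)) :
    p.natDegree ≤ N := by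
  rw [mem_degreeLT] at h
  exact natDegree_le_iff_degree_le.2 (Order.lt_succ_iff.1 (by exact_mod_cast h))

theorem exists_coords {n : ℕ} {K : Type*} [Field K] (V : Submodule K (Fin n → K)) :
    ∃ s : Finset (Fin n), s.card ≤ finrank K V ∧ ∀ v ∈ V, (∀ i ∈ s, v i = 0) → v = 0 := by
  classical
  let φ : Fin n → Dual K V := fun i => (LinearMap.proj i : (Fin n → K) →ₗ[K] K).comp V.subtype
  obtain ⟨κ, a, ha, hsp, hli⟩ := exists_linearIndependent' K φ
  have : Finite κ := Finite.of_injective a ha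
  have := Fintype.ofFinite κ
  refine ⟨Finset.univ.image a, ?_, ?_⟩
  · refine Finset.card_image_le.trans ?_
    have := hli.fintype_card_le_finrank
    rwa [Subspace.dual_finrank_eq] at this
  · intro v hv h
    ext i
    have h1 : φ i ∈ Submodule.span K (Set.range (φ ∘ a)) := by
      rw [hsp]; exact Submodule.subset_span ⟨i, rfl⟩
    have h2 : ∀ ψ ∈ Submodule.span K (Set.range (φ ∘ a)), ψ ⟨v, hv⟩ = 0 := by
      intro ψ hψ
      induction hψ using Submodule.span_induction with
      | mem x hx =>
        obtain ⟨j, rfl⟩ := hx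
        exact h (a j) (Finset.mem_image_of_mem a (Finset.mem_univ j))
      | zero => rfl
      | add x y _ _ hx hy => rw [LinearMap.add_apply, hx, hy, add_zero]
      | smul c x _ hx => rw [LinearMap.smul_apply, hx, smul_zero]
    exact h2 _ h1

/-- The relation map. -/
noncomputable def relMap {n ρ : ℕ} (s : ℕ) (v : ℕ → Fin n → RatFunc k) :
    (Π i : Fin (ρ + 1), degreeLT k (s + i + 1)) →ₗ[k] (Fin n → RatFunc k) where
  toFun η := ∑ i : Fin (ρ + 1), ι (η i : k[X]) • v i
  map_add' η η' := by
    rw [← Finset.sum_add_distrib]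
    refine Finset.sum_congr rfl fun i _ => ?_
    rw [Pi.add_apply, Submodule.coe_add, map_add, add_smul]
  map_smul' c η := by
    rw [RingHom.id_apply, Finset.smul_sum]
    refine Finset.sum_congr rfl fun i _ => ?_
    rw [Pi.smul_apply, Submodule.coe_smul, Algebra.algebraMap_eq_smul_one,
      Algebra.algebraMap_eq_smul_one, smul_assoc, smul_assoc, smul_assoc]

theorem exists_rel_count {n ρ δ da s t : ℕ} (v : ℕ → Fin n → RatFunc k)
    (G : Submodule k (Fin n → RatFunc k)) [FiniteDimensional k G] (hG : finrank k G ≤ ρ * δ)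
    (hmem : ∀ (p : k[X]), ∀ i ≤ ρ, ι p • v i ∈ LinearMap.range (embL k n) ⊔ G)
    (hdeg : ∀ i j, degLe (v i j) (da - i))
    (hρ : ρ = finrank (RatFunc k) (Submodule.span (RatFunc k) (Set.range v)))
    (hs : s = ρ * da + ρ * δ) (ht : t = ρ * (ρ + 1) / 2) (i0 : Fin (ρ + 1)) :
    ∃ η : Fin (ρ + 1) → k[X], η ≠ 0 ∧ ∑ i, ι (η i) • v i = 0 ∧
      ∀ j : ℕ, s + i0 < j + t → (η i0).coeff j = 0 := by
  classical
  let E := Π i : Fin (ρ + 1), degreeLT k (s + i + 1)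
  let Φ : E →ₗ[k] (Fin n → RatFunc k) := relMap s v
  have hΦ : ∀ η : E, Φ η = ∑ i : Fin (ρ + 1), ι (η i : k[X]) • v i := fun _ => rfl
  have hE : finrank k E = (ρ + 1) * (s + 1) + t := by
    have h1 : ∑ i : Fin (ρ + 1), (i : ℕ) = t := by
      rw [Fin.sum_univ_eq_sum_range (fun i => i), Finset.sum_range_id, ht, mul_comm,
        Nat.add_sub_cancel]
    rw [finrank_pi_fintype]
    simp only [finrank_degreeLT]
    simp_rw [add_right_comm s _ 1]
    rw [Finset.sum_add_distrib, h1]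
    simp
  set V := Submodule.span (RatFunc k) (Set.range v) with hV
  have hΦV : ∀ η : E, Φ η ∈ V := by
    intro η
    rw [hΦ]
    exact Submodule.sum_mem _ fun i _ => V.smul_mem _ (Submodule.subset_span ⟨i, rfl⟩)
  have hΦd : ∀ (η : E) (j : Fin n), degLe (Φ η j) ((s + da : ℕ) : ℤ) := by
    intro η j
    rw [hΦ, Finset.sum_apply]
    refine degLe_sum _ _ _ fun i _ => ?_
    have h1 := degLe_poly (natDegree_of_mem_degreeLT (η i).2)
    refine degLe_mono (degLe_mul h1 (hdeg i j)) ?_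
    push_cast; linarith
  let L0 := LinearMap.range (embL k n)
  have hΦL : ∀ η : E, Φ η ∈ L0 ⊔ G := by
    intro η
    rw [hΦ]
    exact Submodule.sum_mem _ fun i _ => hmem _ i (by omega)
  -- first cut
  obtain ⟨A1, -, hA1, hA1'⟩ := cut_subspace (L0.mkQ.comp Φ) ⊤ (G.map L0.mkQ) (ρ * δ)
    ((Submodule.finrank_map_le _ _).trans hG) (by
      intro η _
      obtain ⟨x, hx, y, hy, hxy⟩ := Submodule.mem_sup.1 (hΦL η)
      refine ⟨y, hy, ?_⟩
      rw [LinearMap.comp_apply, ← hxy, map_add]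
      have : L0.mkQ x = 0 := by simpa using hx
      rw [this, zero_add])
  have hA1p : ∀ η ∈ A1, Φ η ∈ L0 := by
    intro η hη
    have := hA1' η hη
    simpa using this
  -- second cut
  obtain ⟨S, hScard, hS⟩ := exists_coords V
  let f2 : E →ₗ[k] (S → RatFunc k) := (LinearMap.funLeft k (RatFunc k) (fun x : S => (x : Fin n))).comp Φ
  let g2 : (S → degreeLT k (s + da + 1)) →ₗ[k] (S → RatFunc k) :=
    (((Algebra.linearMap k[X] (RatFunc k)).restrictScalars k).comp
      (degreeLT k (s + da + 1)).subtype).compLeft S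
  obtain ⟨A2, hA21, hA2, hA2'⟩ := cut_subspace f2 A1 (LinearMap.range g2) (ρ * (s + da + 1)) (by
      refine (LinearMap.finrank_range_le g2).trans ?_
      rw [finrank_pi_fintype]
      simp only [finrank_degreeLT, Finset.sum_const, Finset.card_univ, Fintype.card_coe,
        smul_eq_mul]
      exact Nat.mul_le_mul_right _ (hρ ▸ hScard)) (by
      intro η hη
      obtain ⟨w, hw⟩ := hA1p η hη
      refine ⟨fun x => ⟨w x, mem_degreeLT_of_natDegree (natDegree_le_of_degLe ?_)⟩, ?_⟩
      · rw [← embL_apply, hw]; exact hΦd η x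
      · ext x
        change ι (w x) = Φ η x
        rw [← hw]; rfl)
  -- third cut
  let f3 : E →ₗ[k] (Fin t → k) := LinearMap.pi fun j =>
    ((lcoeff k (s + i0 - j)).comp (degreeLT k (s + i0 + 1)).subtype).comp (LinearMap.proj i0)
  obtain ⟨A3, hA32, hA3, hA3'⟩ := cut_subspace f3 A2 ⊤ t (by simp) (by simp)
  have hpos : 0 < finrank k A3 := by
    rw [finrank_top, hE] at hA1
    have h1 : (ρ + 1) * (s + 1) = ρ * (s + da + 1) + ρ * δ + 1 := by
      have : (ρ + 1) * (s + 1) = ρ * (s + 1) + s + 1 := by ring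
      rw [this]
      nth_rewrite 2 [hs]
      ring
    omega
  have hne : A3 ≠ ⊥ := by
    rintro rfl
    simp at hpos
  obtain ⟨η', hη'm, hη'0⟩ := Submodule.exists_mem_ne_zero_of_ne_bot hne
  obtain ⟨η, hη⟩ : ∃ η : A3, η ≠ 0 := ⟨⟨η', hη'm⟩, fun h => hη'0 (congrArg Subtype.val h)⟩
  refine ⟨fun i => (η.1 i : k[X]), ?_, ?_, ?_⟩
  · intro h0
    apply hη
    ext i : 3
    exact congrFun h0 i
  · rw [← hΦ]
    refine hS _ (hΦV _) fun i hi => ?_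
    exact congrFun (hA2' _ (hA32 η.2)) ⟨i, hi⟩
  · intro j hj
    by_cases hj' : j ≤ s + i0
    · have := congrFun (hA3' _ η.2) ⟨s + i0 - j, by omega⟩
      change (η.1 i0 : k[X]).coeff (s + i0 - (s + i0 - j)) = 0 at this
      rwa [Nat.sub_sub_self hj'] at this
    · exact coeff_eq_zero_of_natDegree_lt
        (lt_of_le_of_lt (natDegree_of_mem_degreeLT (η.1 i0).2) (by omega))

end Final

/-- Main degree bound: if `T` is strictly proper with a realisation `T = X M⁻¹ Y`,
`Δ = det M`, `δ = deg Δ`, `θ = ∂_x + T`, `a ∈ k[x]^n` of degree at most `d_a`, and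
`ρ = dim span(θ^i a : i ≥ 0)`, then there is a nonzero tuple `(η_0, …, η_ρ)` of
polynomials with `∑ η_i θ^i a = 0` and `deg η_i ≤ ρ d_a + ρ δ - (ρ(ρ+1)/2 - i)`. -/
theorem exists_relation_realisation_bound (k : Type*) [Field k] [CharZero k] (n m : ℕ)
    (T : Matrix (Fin n) (Fin n) (RatFunc k))
    (hsp : ∀ i j, T i j = 0 ∨ (T i j).intDegree < 0)
    (X : Matrix (Fin n) (Fin m) (Polynomial k)) (M : Matrix (Fin m) (Fin m) (Polynomial k))
    (Y : Matrix (Fin m) (Fin n) (Polynomial k)) (hM : M.det ≠ 0)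
    (hT : T = X.map (algebraMap (Polynomial k) (RatFunc k)) *
      (M.map (algebraMap (Polynomial k) (RatFunc k)))⁻¹ *
      Y.map (algebraMap (Polynomial k) (RatFunc k)))
    (a : Fin n → Polynomial k) (da : ℕ) (hda : ∀ idx, (a idx).natDegree ≤ da)
    (ρ : ℕ)
    (hρ : ρ = Module.finrank (RatFunc k) (Submodule.span (RatFunc k)
      (Set.range fun i : ℕ =>
        (pseudoLin T)^[i] (fun idx => algebraMap (Polynomial k) (RatFunc k) (a idx))))) :
    ∃ η : Fin (ρ + 1) → Polynomial k, η ≠ 0 ∧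
      (∑ i : Fin (ρ + 1), algebraMap (Polynomial k) (RatFunc k) (η i) •
        (pseudoLin T)^[(i : ℕ)] (fun idx => algebraMap (Polynomial k) (RatFunc k) (a idx))) = 0 ∧
      ∀ i : Fin (ρ + 1),
        (η i).natDegree ≤ ρ * da + ρ * M.det.natDegree - (ρ * (ρ + 1) / 2 - (i : ℕ)) := by
  classical
  set v : ℕ → Fin n → RatFunc k := fun i =>
    (pseudoLin T)^[i] (fun idx => algebraMap (Polynomial k) (RatFunc k) (a idx)) with hv
  obtain ⟨G, hGf, hGr, hGl⟩ := thLat_le T M.det.natDegree (thLat_one_le T X M Y hM hT) ρ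
  obtain ⟨c, hc1, hc⟩ := exists_rel_coeffs T _ ρ hρ
  obtain ⟨i0, hi0, hmax⟩ := Finset.exists_max_image
    (Finset.univ.filter fun i : Fin (ρ + 1) => c i ≠ 0)
    (fun i => (c i).intDegree - (i : ℤ)) ⟨Fin.last ρ, by simp [hc1]⟩
  obtain ⟨η, hη0, hηrel, hηc⟩ := exists_rel_count (δ := M.det.natDegree) (da := da) v G hGr
    (fun p i hi => hGl (thLat_smul T ρ p _ (thLat_mono T hi (iter_mem_thLat T a i))))
    (fun i j => degLe_iter hsp (fun idx => degLe_poly (hda idx)) i j) hρ rfl rfl i0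
  refine ⟨η, hη0, hηrel, fun i => ?_⟩
  have hprop := hc (fun i => algebraMap _ _ (η i)) hηrel
  have hlast : algebraMap k[X] (RatFunc k) (η (Fin.last ρ)) ≠ 0 := by
    intro h0
    apply hη0
    ext1 i
    have := hprop i
    rw [h0, zero_mul] at this
    simpa using this
  have hdegs : ∀ i, c i ≠ 0 → ((η i).natDegree : ℤ) =
      (η (Fin.last ρ)).natDegree + (c i).intDegree := by
    intro i hi
    rw [← RatFunc.intDegree_polynomial, ← RatFunc.intDegree_polynomial,
      ← RatFunc.intDegree_mul hlast hi, ← hprop i]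
  by_cases hi : c i = 0
  · have : η i = 0 := by
      have := hprop i
      rw [hi, mul_zero] at this
      simpa using this
    simp [this]
  have hci0 : c i0 ≠ 0 := (Finset.mem_filter.1 hi0).2
  have h1 := hmax i (Finset.mem_filter.2 ⟨Finset.mem_univ _, hi⟩)
  have h2 := hdegs i hi
  have h3 := hdegs i0 hci0
  have h4 : (η i0).natDegree + ρ * (ρ + 1) / 2 ≤ ρ * da + ρ * M.det.natDegree + i0 := by
    by_contra hlt
    have h5 := hηc (η i0).natDegree (by omega)
    rw [coeff_natDegree, leadingCoeff_eq_zero] at h5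
    have := hprop i0
    rw [h5, map_zero] at this
    exact mul_ne_zero hlast hci0 this.symm
  have h6 : ρ ≤ ρ * (ρ + 1) / 2 := by
    rw [Nat.le_div_iff_mul_le two_pos]
    rcases Nat.eq_zero_or_pos ρ with h | h
    · simp [h]
    · exact Nat.mul_le_mul_left _ (by omega)
  have h7 : (i : ℕ) ≤ ρ := by omega
  generalize ρ * (ρ + 1) / 2 = t at *
  generalize ρ * da + ρ * M.det.natDegree = s at *
  omega
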